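/- arXiv:1906.08371 — 2 statements merged into one kernel-verified Lean document; each statement's English description precedes it below -/
import Mathlib

section
/- Let H be a fixed non-trivial connected core. An edge gadget for H — a graph F with vertices u*, v* such that (a) for all distinct x, y ∈ V(H) some homomorphism F → H maps u* to x and v* to y, and (b) every homomorphism F → H maps u* and v* to distinct vertices — exists if and only if every subset of V(H) is constructible. -/
/-- A set `C` of vertices of `H` is constructible if there is a graph `K` with
vertices `x₀, x₁, …, x_ℓ` and vertices `y₁, …, y_ℓ` of `H` such that `C` is exactly
the set of possible images of `x₀` under homomorphisms `K → H` mapping each `xᵢ`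
to `yᵢ`. -/
def Constructible {α : Type} (H : SimpleGraph α) (C : Set α) : Prop :=
  ∃ (κ : Type) (K : SimpleGraph κ) (ℓ : ℕ) (x₀ : κ) (x : Fin ℓ → κ) (y : Fin ℓ → α),
    C = {c : α | ∃ f : K →g H, (∀ i, f (x i) = y i) ∧ f x₀ = c}

/-- An edge gadget for `H`: a graph `F` with vertices `u*`, `v*` such that every
pair of distinct vertices of `H` is realizable as `(f u*, f v*)` for some
homomorphism `f : F → H`, and every homomorphism `F → H` separates `u*` and `v*`. -/
def HasEdgeGadget {α : Type} (H : SimpleGraph α) : Prop :=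
  ∃ (φ : Type) (F : SimpleGraph φ) (u v : φ),
    (∀ x y : α, x ≠ y → ∃ f : F →g H, f u = x ∧ f v = y) ∧
    (∀ f : F →g H, f u ≠ f v)

/-- walks of length `n` -/
def WW {α : Type} (H : SimpleGraph α) : ℕ → α → α → Prop
  | 0, x, y => x = y
  | n + 1, x, y => ∃ w, WW H n x w ∧ H.Adj w y

theorem WW_add {α : Type} {H : SimpleGraph α} {m n : ℕ} {x y z : α}
    (h1 : WW H m x y) (h2 : WW H n y z) : WW H (m + n) x z := by
  induction n generalizing z with
  | zero => simp only [WW] at h2; subst h2; exact h1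
  | succ n ih =>
    obtain ⟨w, hw, hz⟩ := h2
    exact ⟨w, ih hw, hz⟩

theorem WW_one {α : Type} {H : SimpleGraph α} {x y : α} (h : H.Adj x y) : WW H 1 x y :=
  ⟨x, rfl, h⟩

theorem WW_symm {α : Type} {H : SimpleGraph α} {n : ℕ} {x y : α}
    (h : WW H n x y) : WW H n y x := by
  induction n generalizing y with
  | zero => exact Eq.symm h
  | succ n ih =>
    obtain ⟨w, hw, hz⟩ := h
    have := WW_add (WW_one hz.symm) (ih hw)
    rwa [add_comm] at this

theorem WW_walk {α : Type} {H : SimpleGraph α} {x y : α} (p : H.Walk x y) :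
    WW H p.length x y := by
  induction p with
  | nil => rfl
  | cons h p ih =>
    have := WW_add (WW_one h) ih
    rwa [add_comm] at this

theorem WW_pow {α ι : Type} {H : SimpleGraph α} {f : (ι → α) → α}
    (hf : ∀ x y : ι → α, (∀ j, H.Adj (x j) (y j)) → H.Adj (f x) (f y))
    {n : ℕ} {x y : ι → α} (h : ∀ j, WW H n (x j) (y j)) : WW H n (f x) (f y) := by
  induction n generalizing y with
  | zero =>
    have : x = y := funext h
    subst this; rfl
  | succ n ih =>
    choose w hw hz using h
    exact ⟨f w, ih hw, hf _ _ hz⟩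

theorem core_ram {α : Type} {H : SimpleGraph α}
    (hcore : ∀ f : H →g H, Function.Bijective f) {a b : α} (hab : a ≠ b) :
    ∃ c, H.Adj a c ∧ ¬ H.Adj b c := by
  classical
  by_contra hcon
  push Not at hcon
  let h : H →g H :=
    { toFun := fun x => if x = a then b else x
      map_rel' := by
        intro x y hxy
        by_cases hx : x = a <;> by_cases hy : y = a
        · subst hx; subst hy; exact absurd hxy (H.irrefl)
        · subst hx; simpa [hy] using hcon y hxy
        · subst hy; simpa [hx] using (hcon x hxy.symm).symm
        · simpa [hx, hy] using hxy }
  have := (hcore h).1 (a₁ := a) (a₂ := b) (by simp [h])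
  exact hab this

theorem bin_edges {α : Type} {H : SimpleGraph α} (hconn : H.Connected)
    (g : α → α → α) (hc : ∀ x y, g x y = x ∨ g x y = y)
    (hg : ∀ x x' y y', H.Adj x x' → H.Adj y y' → H.Adj (g x y) (g x' y'))
    {a b : α} (hab : H.Adj a b) (h : g a b = a) :
    ∀ u v, H.Adj u v → g u v = u := by
  have step : ∀ a b c, H.Adj a b → H.Adj b c → g a b = a → g b c = b := by
    intro a b c hab hbc h
    rcases hc b c with h1 | h1
    · exact h1
    exfalso
    have hac : H.Adj a c := by
      have := hg a b b c hab hbc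
      rwa [h, h1] at this
    have h2 : g c a = c := by
      rcases hc c a with h2 | h2
      · exact h2
      · have := hg c a a b hac.symm hab
        rw [h2, h] at this
        exact absurd this H.irrefl
    have := hg b c c a hbc hac.symm
    rw [h1, h2] at this
    exact H.irrefl this
  have key : ∀ u, Relation.ReflTransGen H.Adj b u → ∀ v, H.Adj u v → g u v = u := by
    intro u hu
    induction hu with
    | refl => intro v hv; exact step a b v hab hv h
    | tail _ h2 ih => intro v hv; exact step _ _ v h2 hv (ih _ h2)
  intro u v huv
  exact key u ((SimpleGraph.reachable_iff_reflTransGen b u).1 (hconn.preconnected b u)) v huv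

theorem bin_proj {α : Type} [Fintype α] {H : SimpleGraph α} (hconn : H.Connected)
    (hcore : ∀ f : H →g H, Function.Bijective f)
    (hnb : ∀ v, ∃ w, H.Adj v w)
    (g : α → α → α) (hc : ∀ x y, g x y = x ∨ g x y = y)
    (hg : ∀ x x' y y', H.Adj x x' → H.Adj y y' → H.Adj (g x y) (g x' y'))
    (he : ∀ u v, H.Adj u v → g u v = u) : ∀ x y, g x y = x := by
  classical
  by_contra hcon
  push Not at hcon
  obtain ⟨x0, y0, h0⟩ := hcon
  obtain ⟨y1, h01⟩ := hnb y0
  have f1 : ∀ {x y}, g x y ≠ x → ¬ H.Adj x y := fun h h' => h (he _ _ h')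
  have f0 : ∀ {x y}, g x y ≠ x → g x y = y := fun {x y} h => (hc x y).resolve_left h
  have f3 : ∀ {x y}, g x y ≠ x → x ≠ y := by
    rintro x y h rfl
    rcases hc x x with h' | h' <;> exact h h'
  have f2 : ∀ {x y c d}, g x y ≠ x → H.Adj x c → H.Adj y d → ¬ H.Adj c y → g c d ≠ c := by
    intro x y c d h hxc hyd hcy h'
    have := hg x c y d hxc hyd
    rw [f0 h, h'] at this
    exact hcy this.symm
  have f4 : ∀ {x z z' c}, g x z ≠ x → H.Adj z z' → H.Adj x c → ¬ H.Adj c z → ¬ H.Adj c z' :=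
    fun h hz hxc hcz => f1 (f2 h hxc hz hcz)
  have disj : ∀ x y y', H.Adj y y' → g x y ≠ x → g x y' ≠ x → False := by
    intro x y y' hyy h h'
    have inv : ∀ n, ∃ x, ∀ m, m ≤ n + 1 → ∀ z, WW H m y z → g x z ≠ x := by
      intro n
      induction n with
      | zero =>
        obtain ⟨c, hxc, hyc⟩ := core_ram hcore (f3 h)
        have hcy : ¬ H.Adj c y := fun h => hyc h.symm
        refine ⟨c, ?_⟩
        intro m hm z hz
        have : m = 0 ∨ m = 1 := by omega
        rcases this with rfl | rfl
        · have : y = z := hz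
          subst this
          exact f2 h' hxc hyy.symm (f4 h hyy hxc hcy)
        · obtain ⟨w, hw, hz⟩ := hz
          have : y = w := hw
          subst this
          exact f2 h hxc hz hcy
      | succ n ih =>
        obtain ⟨x, hx⟩ := ih
        have hy := hx 0 (by omega) y rfl
        obtain ⟨c, hxc, hyc⟩ := core_ram hcore (f3 hy)
        have hcy : ¬ H.Adj c y := fun h => hyc h.symm
        have hcz : ∀ m, m ≤ n + 1 → ∀ z, WW H m y z → ¬ H.Adj c z := by
          intro m
          induction m with
          | zero => intro _ z hz; have : y = z := hz
                    subst this; exact hcy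
          | succ m ihm =>
            intro hm z hz
            obtain ⟨w, hw, hz⟩ := hz
            exact f4 (hx m (by omega) w hw) hz hxc (ihm (by omega) w hw)
        refine ⟨c, ?_⟩
        intro m hm z hz
        cases m with
        | zero =>
          have : y = z := hz
          subst this
          exact f2 (hx 1 (by omega) y' (WW_one hyy)) hxc hyy.symm
            (hcz 1 (by omega) y' (WW_one hyy))
        | succ m =>
          obtain ⟨w, hw, hz⟩ := hz
          exact f2 (hx m (by omega) w hw) hxc hz (hcz m (by omega) w hw)
    have hd : ∀ z, ∃ m, WW H m y z := fun z =>
      ⟨_, WW_walk (hconn.preconnected y z).some⟩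
    choose d hd using hd
    obtain ⟨x, hx⟩ := inv (Finset.univ.sup d)
    exact f3 (hx (d x) ((Finset.le_sup (Finset.mem_univ x)).trans (Nat.le_succ _)) x (hd x)) rfl
  have hadj0 : ∀ x c, H.Adj x c → g x y0 ≠ x → g c y1 = c → H.Adj y0 c := by
    intro x c hxc h h'
    have := hg x c y0 y1 hxc h01
    rwa [f0 h, h'] at this
  have hadj1 : ∀ x c, H.Adj x c → g x y1 ≠ x → g c y0 = c → H.Adj y1 c := by
    intro x c hxc h h'
    have := hg x c y1 y0 hxc h01.symm
    rwa [f0 h, h'] at this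
  let φ : α → α := fun x => if g x y0 ≠ x then y0 else if g x y1 ≠ x then y1 else x
  have φ0 : ∀ x, g x y0 ≠ x → φ x = y0 := fun x h => by simp [φ, h]
  have φ1 : ∀ x, g x y1 ≠ x → φ x = y1 := fun x h => by
    have : g x y0 = x := by
      by_contra h'; exact disj x y0 y1 h01 h' h
    simp [φ, h, this]
  have φ2 : ∀ x, g x y0 = x → g x y1 = x → φ x = x := fun x h h' => by simp [φ, h, h']
  have half : ∀ x c, H.Adj x c → (g x y0 ≠ x ∨ g x y1 ≠ x) → H.Adj (φ x) (φ c) := by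
    intro x c hxc h
    rcases h with h | h
    · rw [φ0 x h]
      by_cases h' : g c y1 = c
      · have := hadj0 x c hxc h h'
        rwa [φ2 c (by by_contra h''; exact f1 h'' this.symm) h']
      · rwa [φ1 c h']
    · rw [φ1 x h]
      by_cases h' : g c y0 = c
      · have := hadj1 x c hxc h h'
        rwa [φ2 c h' (by by_contra h''; exact f1 h'' this.symm)]
      · rw [φ0 c h']; exact h01.symm
  let h : H →g H :=
    { toFun := φ
      map_rel' := by
        intro x c hxc
        by_cases hx : g x y0 ≠ x ∨ g x y1 ≠ x
        · exact half x c hxc hx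
        by_cases hcc : g c y0 ≠ c ∨ g c y1 ≠ c
        · exact (half c x hxc.symm hcc).symm
        push Not at hx hcc
        rwa [φ2 x hx.1 hx.2, φ2 c hcc.1 hcc.2] }
  have := (hcore h).1 (a₁ := x0) (a₂ := y0) (by
    change φ x0 = φ y0
    rw [φ0 x0 h0, φ2 y0 ((hc y0 y0).elim id id) (he _ _ h01)])
  exact f3 h0 this

theorem nary_proj {α ι : Type} [Fintype α] [Fintype ι] [Nonempty ι] {H : SimpleGraph α}
    (hconn : H.Connected)
    (hcore : ∀ f : H →g H, Function.Bijective f)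
    (hnb : ∀ v, ∃ w, H.Adj v w)
    (hall : ∃ n, ∀ u v, WW H n u v)
    (htri : ∃ k a b c, WW H k a b ∧ WW H k b c ∧ WW H k a c ∧ ∀ v, ¬ WW H k v v)
    (f : (ι → α) → α) (hc : ∀ x, ∃ j, f x = x j)
    (hf : ∀ x y : ι → α, (∀ j, H.Adj (x j) (y j)) → H.Adj (f x) (f y)) :
    ∃ i, ∀ x, f x = x i := by
  classical
  let g : Finset ι → α → α → α := fun S a b => f (fun j => if j ∈ S then a else b)
  have gc : ∀ S x y, g S x y = x ∨ g S x y = y := by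
    intro S x y
    obtain ⟨j, hj⟩ := hc (fun j => if j ∈ S then x else y)
    by_cases h : j ∈ S
    · left; simpa [h] using hj
    · right; simpa [h] using hj
  have gh : ∀ S x x' y y', H.Adj x x' → H.Adj y y' → H.Adj (g S x y) (g S x' y') := by
    intro S x x' y y' h h'
    apply hf
    intro j
    by_cases hj : j ∈ S <;> simp [hj, h, h']
  have gcompl : ∀ S x y, g Sᶜ x y = g S y x := by
    intro S x y
    simp only [g]
    congr 1
    funext j
    by_cases hj : j ∈ S <;> simp [hj]
  obtain ⟨v0⟩ := hconn.nonempty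
  obtain ⟨w0, hvw⟩ := hnb v0
  let F : Finset ι → Prop := fun S => ∀ a b, g S a b = a
  have Fdich : ∀ S, F S ∨ F Sᶜ := by
    intro S
    rcases gc S v0 w0 with h | h
    · left
      exact bin_proj hconn hcore hnb (g S) (gc S) (gh S)
        (bin_edges hconn (g S) (gc S) (gh S) hvw h)
    · right
      rw [← gcompl] at h
      exact bin_proj hconn hcore hnb (g Sᶜ) (gc _) (gh _)
        (bin_edges hconn (g Sᶜ) (gc _) (gh _) hvw.symm h)
  have Fempty : ¬ F ∅ := by
    intro h
    have h1 := h v0 w0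
    obtain ⟨j, hj⟩ := hc (fun _ => w0)
    have : g ∅ v0 w0 = w0 := by simpa [g] using hj
    rw [this] at h1
    subst h1
    exact H.irrefl hvw
  have Funiv : F Finset.univ := by
    have := Fdich ∅
    simpa [Fempty] using this
  obtain ⟨k, a, b, c, hab, hbc, hac, hirr⟩ := htri
  have maj : ∀ P Q : Finset ι, Disjoint P Q → F Pᶜ → F Qᶜ → ¬ F (P ∪ Q) := by
    intro P Q hPQ hP hQ hR
    let x : ι → α := fun j => if j ∈ P then a else if j ∈ Q then b else c
    have hne : ∀ z : ι → α, (∀ j, WW H k (x j) (z j)) → f x ≠ f z := by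
      intro z hz h
      have := WW_pow hf hz
      rw [h] at this
      exact hirr _ this
    have ha : f x ≠ a := by
      have h1 : g P b a = a := by rw [← gcompl]; exact hP a b
      rw [← h1]
      apply hne
      intro j
      by_cases h : j ∈ P
      · simpa [x, h] using hab
      · by_cases h' : j ∈ Q
        · simpa [x, h, h'] using WW_symm hab
        · simpa [x, h, h'] using WW_symm hac
    have hb : f x ≠ b := by
      have h1 : g Q a b = b := by rw [← gcompl]; exact hQ b a
      rw [← h1]
      apply hne
      intro j
      by_cases h : j ∈ P
      · have h' : j ∉ Q := Finset.disjoint_left.1 hPQ h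
        simpa [x, h, h'] using hab
      · by_cases h' : j ∈ Q
        · simpa [x, h, h'] using WW_symm hab
        · simpa [x, h, h'] using WW_symm hbc
    have hcc : f x ≠ c := by
      have h1 : g (P ∪ Q) c a = c := hR c a
      rw [← h1]
      apply hne
      intro j
      by_cases h : j ∈ P
      · simpa [x, h] using hac
      · by_cases h' : j ∈ Q
        · simpa [x, h, h'] using hbc
        · simpa [x, h, h'] using WW_symm hac
    obtain ⟨j, hj⟩ := hc x
    by_cases h : j ∈ P
    · exact ha (by simpa [x, h] using hj)
    · by_cases h' : j ∈ Q
      · exact hb (by simpa [x, h, h'] using hj)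
      · exact hcc (by simpa [x, h, h'] using hj)
  have single : ∀ S : Finset ι, F S → ∃ i, F {i} := by
    intro S
    induction S using Finset.induction_on with
    | empty => intro h; exact absurd h Fempty
    | insert i S hi ih =>
      intro h
      by_contra hcon
      have h1 : F ({i} : Finset ι)ᶜ := (Fdich {i}).resolve_left (fun h => hcon ⟨i, h⟩)
      have h2 : F Sᶜ := (Fdich S).resolve_left (fun h => hcon (ih h))
      exact maj {i} S (by simpa using hi) h1 h2 (by rwa [Finset.insert_eq] at h)
  obtain ⟨i, hi⟩ := single _ Funiv
  refine ⟨i, fun x => ?_⟩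
  by_contra hx
  have walk : ∀ n, ∀ y : ι → α, (∀ j, WW H n (x j) (y j)) →
      ∃ x', f x' ≠ x' i ∧ ∀ j, j ≠ i → x' j = y j := by
    intro n
    induction n with
    | zero =>
      intro y hy
      exact ⟨x, hx, fun j _ => hy j⟩
    | succ n ih =>
      intro y hy
      choose w hw hz using hy
      obtain ⟨x', hx', hx'w⟩ := ih w hw
      obtain ⟨c, hc1, hc2⟩ := core_ram hcore (Ne.symm hx')
      refine ⟨Function.update y i c, ?_, fun j hj => by simp [hj]⟩
      intro h
      have := hf x' (Function.update y i c) (by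
        intro j
        by_cases hj : j = i
        · subst hj; simpa using hc1
        · simpa [hj, hx'w j hj] using hz j)
      rw [h] at this
      simp at this
      exact hc2 this
  obtain ⟨n, hn⟩ := hall
  obtain ⟨x', hx', hx'y⟩ := walk n (fun _ => v0) (fun j => hn _ _)
  apply hx'
  have := hi (x' i) v0
  simp only [g] at this
  convert this using 2
  funext j
  by_cases hj : j = i
  · subst hj; simp
  · simp [hj, hx'y j hj]

theorem graph_facts {α : Type} [Fintype α] (H : SimpleGraph α)
    (hcard : 3 ≤ Fintype.card α) (hconn : H.Connected)
    (hcore : ∀ f : H →g H, Function.Bijective f) :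
    (∀ v, ∃ w, H.Adj v w) ∧ (∃ n, ∀ u v, WW H n u v) ∧
    (∃ k a b c, WW H k a b ∧ WW H k b c ∧ WW H k a c ∧ ∀ v, ¬ WW H k v v) := by
  classical
  have : Nontrivial α := Fintype.one_lt_card_iff_nontrivial.1 (by omega)
  have hnb : ∀ v, ∃ w, H.Adj v w := by
    intro v
    obtain ⟨b, hb⟩ := exists_ne v
    obtain ⟨c, hc, _⟩ := core_ram hcore hb.symm
    exact ⟨c, hc⟩
  have hmono : ∀ j n u v, WW H n u v → WW H (n + 2 * j) u v := by
    intro j n u v h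
    induction j with
    | zero => exact h
    | succ j ih =>
      obtain ⟨w, hw⟩ := hnb v
      exact ⟨w, ⟨v, ih, hw⟩, hw.symm⟩
  have hodd : ∃ v m, WW H (2 * m + 1) v v := by
    by_contra hcon
    push Not at hcon
    have hcol : H.Colorable 2 := by
      rw [SimpleGraph.two_colorable_iff_forall_loop_even]
      intro u p
      by_contra hp
      rw [Nat.not_even_iff_odd] at hp
      obtain ⟨m, hm⟩ := hp
      have := WW_walk p
      rw [hm] at this
      exact hcon _ _ this
    obtain ⟨C⟩ := hcol
    obtain ⟨v0⟩ := hconn.nonempty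
    obtain ⟨w0, hvw⟩ := hnb v0
    let h : H →g H :=
      { toFun := fun x => if C x = 0 then v0 else w0
        map_rel' := by
          intro x y hxy
          have := C.valid hxy
          by_cases hx : C x = 0 <;> by_cases hy : C y = 0
          · exact absurd (hx.trans hy.symm) this
          · simpa [hx, hy] using hvw
          · simpa [hx, hy] using hvw.symm
          · exfalso; omega }
    have hinj : Function.Injective C := by
      intro x y hxy
      apply (hcore h).1
      change (if C x = 0 then v0 else w0) = (if C y = 0 then v0 else w0)
      rw [hxy]
    have := Fintype.card_le_of_injective C hinj
    simp at this
    omega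
  have hdist : ∀ u v, ∃ m, WW H m u v := fun u v =>
      ⟨_, WW_walk (hconn.preconnected u v).some⟩
  refine ⟨hnb, ?_, ?_⟩
  · obtain ⟨o, m, ho⟩ := hodd
    have heven : ∀ p : α × α, ∃ k, WW H (2 * k) p.1 p.2 := by
      rintro ⟨u, v⟩
      obtain ⟨s, hs⟩ := hdist u o
      obtain ⟨t, ht⟩ := hdist o v
      rcases Nat.even_or_odd' (s + t) with ⟨k, hk | hk⟩
      · exact ⟨k, hk ▸ WW_add hs ht⟩
      · refine ⟨k + m + 1, ?_⟩
        have := WW_add (WW_add hs ho) ht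
        rwa [show s + (2 * m + 1) + t = 2 * (k + m + 1) by omega] at this
    choose d hd using heven
    refine ⟨2 * Finset.univ.sup d, fun u v => ?_⟩
    have h1 : d (u, v) ≤ Finset.univ.sup d := Finset.le_sup (Finset.mem_univ _)
    have := hmono (Finset.univ.sup d - d (u, v)) _ _ _ (hd (u, v))
    rwa [show 2 * d (u, v) + 2 * (Finset.univ.sup d - d (u, v)) = 2 * Finset.univ.sup d by omega]
      at this
  · have hex : ∃ m v, WW H (2 * m + 1) v v := by
      obtain ⟨v, m, h⟩ := hodd; exact ⟨m, v, h⟩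
    obtain ⟨v, hv⟩ := Nat.find_spec hex
    have hmin := fun m (h : m < Nat.find hex) => Nat.find_min hex h
    generalize Nat.find hex = m at hv hmin
    cases m with
    | zero =>
      obtain ⟨w, hw, h⟩ := hv
      have : v = w := hw
      subst this
      exact absurd h H.irrefl
    | succ m =>
      obtain ⟨w, ⟨u, hu, huw⟩, hwv⟩ := hv
      refine ⟨2 * m + 1, v, u, w, hu, ?_, ?_, ?_⟩
      · have := hmono m _ _ _ (WW_one huw)
        rwa [add_comm] at this
      · have := hmono m _ _ _ (WW_one hwv.symm)
        rwa [add_comm] at this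
      · intro z hz
        exact hmin m (by omega) ⟨z, hz⟩

theorem gadget_of_constr {α : Type} [Fintype α] (H : SimpleGraph α)
    (hcard : 3 ≤ Fintype.card α) (hconn : H.Connected)
    (hcore : ∀ f : H →g H, Function.Bijective f)
    (hC : ∀ C : Set α, Constructible H C) : HasEdgeGadget H := by
  classical
  obtain ⟨hnb, hall, htri⟩ := graph_facts H hcard hconn hcore
  have : Nontrivial α := Fintype.one_lt_card_iff_nontrivial.1 (by omega)
  let ι := {p : α × α // p.1 ≠ p.2}
  haveI : Nonempty ι := by
    obtain ⟨a, b, h⟩ := exists_pair_ne α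
    exact ⟨⟨(a, b), h⟩⟩
  let F : SimpleGraph (ι → α) :=
    { Adj := fun x y => ∀ j, H.Adj (x j) (y j)
      symm := ⟨fun x y h j => (h j).symm⟩
      loopless := ⟨fun x h => H.irrefl (h (Classical.arbitrary ι))⟩ }
  refine ⟨ι → α, F, fun p => p.1.1, fun p => p.1.2, ?_, ?_⟩
  · intro x y hxy
    exact ⟨⟨fun t => t ⟨(x, y), hxy⟩, fun {a b} h => h _⟩, rfl, rfl⟩
  · intro f
    have hf : ∀ x y : ι → α, (∀ j, H.Adj (x j) (y j)) → H.Adj (f x) (f y) :=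
      fun x y h => f.map_rel (show F.Adj x y from h)
    let s : H →g H := ⟨fun a => f (fun _ => a), fun {a b} h => hf _ _ (fun _ => h)⟩
    let e : Equiv.Perm α := Equiv.ofBijective s (hcore s)
    have hpow : ∀ n : ℕ, ∀ a b, H.Adj a b → H.Adj ((e ^ n) a) ((e ^ n) b) := by
      intro n
      induction n with
      | zero => intro a b h; simpa using h
      | succ n ih =>
        intro a b h
        rw [pow_succ', Equiv.Perm.mul_apply, Equiv.Perm.mul_apply]
        exact s.map_rel (ih a b h)
    have hinv : ∀ a b, H.Adj a b → H.Adj (e.symm a) (e.symm b) := by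
      intro a b h
      have h1 : e⁻¹ = e ^ (orderOf e - 1) := by
        rw [inv_eq_iff_mul_eq_one, ← pow_succ', Nat.sub_add_cancel (orderOf_pos e),
          pow_orderOf_eq_one]
      have h2 := hpow (orderOf e - 1) a b h
      rw [← h1] at h2
      exact h2
    let f' : (ι → α) → α := fun x => e.symm (f x)
    have hid : ∀ a, f' (fun _ => a) = a := fun a => e.symm_apply_apply a
    have hf' : ∀ x y : ι → α, (∀ j, H.Adj (x j) (y j)) → H.Adj (f' x) (f' y) :=
      fun x y h => hinv _ _ (hf x y h)
    have hcons : ∀ x, ∃ j, f' x = x j := by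
      intro x
      obtain ⟨κ, K, l, x₀, xs, ys, hCe⟩ := hC (Set.range x)
      have h1 : ∀ j, ∃ q : K →g H, (∀ i, q (xs i) = ys i) ∧ q x₀ = x j := by
        intro j
        have : x j ∈ Set.range x := ⟨j, rfl⟩
        rw [hCe] at this
        exact this
      choose q hq hq0 using h1
      have : f' x ∈ Set.range x := by
        rw [hCe]
        refine ⟨⟨fun t => f' (fun j => q j t), fun {a b} h => hf' _ _ fun j => (q j).map_rel h⟩,
          ?_, ?_⟩
        · intro i
          change f' (fun j => q j (xs i)) = ys i
          simp only [hq, hid]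
        · change f' (fun j => q j x₀) = f' x
          simp only [hq0]
      obtain ⟨j, hj⟩ := this
      exact ⟨j, hj.symm⟩
    obtain ⟨i, hi⟩ := nary_proj hconn hcore hnb hall htri f' hcons hf'
    intro h
    have h1 := hi (fun p => p.1.1)
    have h2 := hi (fun p => p.1.2)
    apply i.2
    rw [← h1, ← h2]
    simp only [f', h]

theorem constr_of_gadget {α : Type} [Fintype α] (H : SimpleGraph α)
    (hG : HasEdgeGadget H) (C : Set α) : Constructible H C := by
  classical
  obtain ⟨φ, F, u, v, ha, hb⟩ := hG
  let D := {z : α // z ∉ C}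
  let π : D → φ → Unit ⊕ (D × φ) := fun z w => if w = u then Sum.inl () else Sum.inr (z, w)
  have hπ : ∀ z w w', π z w = π z w' → w = w' := by
    intro z w w' h
    by_cases h1 : w = u <;> by_cases h2 : w' = u <;> simp [π, h1, h2] at h ⊢
    exact h
  let K : SimpleGraph (Unit ⊕ (D × φ)) :=
    { Adj := fun p q => ∃ z w w', F.Adj w w' ∧ p = π z w ∧ q = π z w'
      symm := ⟨by
        rintro p q ⟨z, w, w', h, h1, h2⟩
        exact ⟨z, w', w, h.symm, h2, h1⟩⟩
      loopless := ⟨by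
        rintro p ⟨z, w, w', h, h1, h2⟩
        have := hπ z w w' (h1.symm.trans h2)
        subst this
        exact F.irrefl h⟩ }
  let en := (Fintype.equivFin D).symm
  refine ⟨_, K, Fintype.card D, Sum.inl (), fun i => π (en i) v, fun i => (en i).1, ?_⟩
  ext c
  constructor
  · intro hc
    have h1 : ∀ z : D, ∃ f : F →g H, f u = c ∧ f v = z.1 := fun z =>
      ha c z.1 (fun h => z.2 (h ▸ hc))
    choose q hqu hqv using h1
    let r : Unit ⊕ (D × φ) → α := Sum.elim (fun _ => c) (fun p => q p.1 p.2)
    have hr : ∀ z w, r (π z w) = q z w := by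
      intro z w
      by_cases h : w = u
      · subst h; simp [π, r, hqu]
      · simp [π, r, h]
    refine ⟨⟨r, ?_⟩, ?_, rfl⟩
    · rintro _ _ ⟨z, w, w', h, rfl, rfl⟩
      rw [hr, hr]
      exact (q z).map_rel h
    · intro i
      change r _ = _
      rw [hr, hqv]
  · rintro ⟨f, h1, h2⟩
    by_contra hc
    let z : D := ⟨c, hc⟩
    let p : F →g H := ⟨fun w => f (π z w), fun {a b} h => f.map_rel ⟨z, a, b, h, rfl, rfl⟩⟩
    apply hb p
    have h3 := h1 (en.symm z)
    simp only [Equiv.apply_symm_apply] at h3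
    change f (π z u) = f (π z v)
    rw [h3, show π z u = Sum.inl () by simp [π], h2]

/-- For a fixed non-trivial connected core `H`, an edge gadget for `H`
exists if and only if every subset of `V(H)` is constructible. -/
theorem edge_gadget_iff_all_constructible {α : Type} [Fintype α] (H : SimpleGraph α)
    (hcard : 3 ≤ Fintype.card α) (hconn : H.Connected)
    (hcore : ∀ f : H →g H, Function.Bijective f) :
    HasEdgeGadget H ↔ ∀ C : Set α, Constructible H C :=
  ⟨fun h C => constr_of_gadget H h C, gadget_of_constr H hcard hconn hcore⟩
end

section
/- For every finite family of pairwise incomparable non-trivial cores H_0, ..., H_k, there exists a core H_{k+1} incomparable with each H_i; consequently there exist arbitrarily large families of pairwise incomparable cores. (Key step: if og(H) > max_i og(H_i) and χ(H) > max_i χ(H_i), then the core of H is incomparable with every H_i.) -/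
def ShiftG (K N : ℕ) : SimpleGraph (Fin K → Fin N) :=
  SimpleGraph.fromRel (fun x y => ∃ w : Fin (K+1) → Fin N, StrictMono w ∧ Fin.init w = x ∧ Fin.tail w = y)

lemma shift_color (k : ℕ) : ∀ (r : ℕ), ∃ N : ℕ, ∀ c : (Fin (k+1) → Fin N) → Fin r,
    ∃ w : Fin (k+2) → Fin N, StrictMono w ∧ c (Fin.init w) = c (Fin.tail w) := by
  induction k with
  | zero =>
    intro r
    refine ⟨r+1, fun c => ?_⟩
    obtain ⟨a, b, hab, h⟩ := Fintype.exists_ne_map_eq_of_card_lt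
      (fun i : Fin (r+1) => c (fun _ => i)) (by simp)
    have key : ∀ a b : Fin (r+1), a < b → c (fun _ => a) = c (fun _ => b) →
        ∃ w : Fin (0+2) → Fin (r+1), StrictMono w ∧ c (Fin.init w) = c (Fin.tail w) := by
      intro a b hlt h
      refine ⟨![a, b], ?_, ?_⟩
      · intro i j hij
        fin_cases i <;> fin_cases j <;> simp_all
      · convert h using 2
        · ext i; fin_cases i; rfl
        · ext i; fin_cases i; rfl
    rcases lt_or_gt_of_ne hab with h1 | h1
    · exact key a b h1 h
    · exact key b a h1 h.symm
  | succ k ih =>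
    intro r
    obtain ⟨N, hN⟩ := ih (Fintype.card (Set (Fin r)))
    refine ⟨N, fun c => ?_⟩
    let c' : (Fin (k+1) → Fin N) → Set (Fin r) := fun x =>
      {a | ∃ y : Fin (k+2) → Fin N, StrictMono y ∧ Fin.init y = x ∧ c y = a}
    obtain ⟨z, hz, hc⟩ := hN (fun x => Fintype.equivFin _ (c' x))
    have hc' : c' (Fin.init z) = c' (Fin.tail z) := (Fintype.equivFin _).injective hc
    have ha : c z ∈ c' (Fin.init z) := ⟨z, hz, rfl, rfl⟩
    rw [hc'] at ha
    obtain ⟨y, hy, hyz, hcy⟩ := ha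
    refine ⟨Fin.cons (z 0) y, ?_, ?_⟩
    · rw [Fin.strictMono_iff_lt_succ]
      intro i
      refine Fin.cases ?_ (fun i => ?_) i
      · have h0 : y 0 = z 1 := congrFun hyz 0
        have : z 0 < z 1 := hz (by simp)
        simpa [h0] using this
      · rw [← Fin.succ_castSucc]
        simp only [Fin.cons_succ]
        exact hy (Fin.castSucc_lt_succ)
    · rw [Fin.tail_cons, hcy]
      congr 1
      ext i
      refine congrArg _ (?_ : _ = z i)
      refine Fin.cases ?_ (fun i => ?_) i
      · simp [Fin.init]
      · have := congrFun hyz i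
        simp only [Fin.init, Fin.tail] at this
        simp only [Fin.init, ← Fin.succ_castSucc, Fin.cons_succ, this]

lemma shift_not_colorable (k r : ℕ) : ∃ N, ¬ (ShiftG (k+1) N).Colorable r := by
  obtain ⟨N, hN⟩ := shift_color k r
  refine ⟨N, fun ⟨c⟩ => ?_⟩
  obtain ⟨w, hw, h⟩ := hN c
  refine c.valid ?_ h
  rw [ShiftG, SimpleGraph.fromRel_adj]
  refine ⟨fun he => ?_, Or.inl ⟨w, hw, rfl, rfl⟩⟩
  have := congrFun he 0
  have h2 : w 0 < w 1 := hw (by simp)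
  exact h2.ne this

lemma shift_adj {K N : ℕ} {x y : Fin K → Fin N} (h : (ShiftG K N).Adj x y) :
    StrictMono x ∧ ∃ e : ℤ, (e = 1 ∨ e = -1) ∧ ∀ p q : Fin K, (q:ℤ) = p + e → x p = y q := by
  rw [ShiftG, SimpleGraph.fromRel_adj] at h
  rcases h.2 with ⟨w, hw, rfl, rfl⟩ | ⟨w, hw, rfl, rfl⟩
  · refine ⟨fun i j hij => hw (by simpa using hij), -1, Or.inr rfl, fun p q hpq => ?_⟩
    simp only [Fin.init, Fin.tail]
    congr 1
    ext
    simp; omega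
  · refine ⟨fun i j hij => hw (by simpa using hij), 1, Or.inl rfl, fun p q hpq => ?_⟩
    simp only [Fin.init, Fin.tail]
    congr 1
    ext
    simp; omega

lemma shift_walk {K N : ℕ} {x y : Fin K → Fin N} (w : (ShiftG K N).Walk x y) :
    ∃ d : ℤ, |d| ≤ w.length ∧ d % 2 = w.length % 2 ∧ ∀ p q : Fin K, w.length ≤ (p:ℕ) →
      p + w.length < K → (q:ℤ) = p + d → x p = y q := by
  induction w with
  | nil =>
    refine ⟨0, by simp, by simp, fun p q _ _ h => ?_⟩
    congr 1; ext; omega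
  | cons h w ih =>
    obtain ⟨d, h1, h2, h3⟩ := ih
    obtain ⟨_, e, he, h4⟩ := shift_adj h
    refine ⟨d + e, ?_, ?_, fun p q hp hq hpq => ?_⟩
    · rw [abs_le] at *
      simp only [SimpleGraph.Walk.length_cons]; push_cast; omega
    · simp only [SimpleGraph.Walk.length_cons]; push_cast; omega
    · simp only [SimpleGraph.Walk.length_cons] at hp hq
      have hb : ((p:ℤ) + e).toNat < K := by omega
      rw [h4 p ⟨((p:ℤ) + e).toNat, hb⟩ (by simp; omega)]
      apply h3 <;> simp <;> omega

lemma shift_no_odd {K N : ℕ} {x : Fin K → Fin N} (w : (ShiftG K N).Walk x x)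
    (hodd : Odd w.length) (hK : 2 * w.length + 1 ≤ K) : False := by
  obtain ⟨d, h1, h2, h3⟩ := shift_walk w
  have hx : StrictMono x := by
    cases w with
    | nil => simp at hodd
    | cons h w => exact (shift_adj h).1
  rw [Nat.odd_iff] at hodd
  rw [abs_le] at h1
  have hb : ((w.length:ℤ) + d).toNat < K := by omega
  have := h3 ⟨w.length, by omega⟩ ⟨((w.length:ℤ) + d).toNat, hb⟩ le_rfl (by simp; omega)
    (by simp; omega)
  have := congrArg Fin.val (hx.injective this)
  simp at this
  omega

lemma exists_core {V : Type} [Fintype V] (G : SimpleGraph V) :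
    ∃ (m : ℕ) (H : SimpleGraph (Fin m)), (∀ f : H →g H, Function.Bijective f) ∧
      Nonempty (H →g G) ∧ Nonempty (G →g H) := by
  classical
  have hex : ∃ m : ℕ, ∃ H : SimpleGraph (Fin m), Nonempty (H →g G) ∧ Nonempty (G →g H) := by
    let e := (Fintype.equivFin V)
    exact ⟨_, G.map e.toEmbedding, ⟨(SimpleGraph.Iso.map e G).symm.toHom⟩,
      ⟨(SimpleGraph.Iso.map e G).toHom⟩⟩
  obtain ⟨H, ⟨a⟩, ⟨b⟩⟩ := Nat.find_spec hex
  refine ⟨_, H, fun f => ?_, ⟨a⟩, ⟨b⟩⟩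
  rw [← Finite.surjective_iff_bijective]
  by_contra hf
  let S := Set.range f
  let e := Fintype.equivFin S
  have hlt : Fintype.card S < Nat.find hex := by
    have := Fintype.card_subtype_lt (p := fun x => x ∈ S) (not_forall.mp hf).choose_spec
    simpa using this
  refine Nat.find_min hex hlt ⟨(H.induce S).map e.toEmbedding, ⟨?_⟩, ⟨?_⟩⟩
  · exact (a.comp (SimpleGraph.Embedding.induce S).toHom).comp
      (SimpleGraph.Iso.map e (H.induce S)).symm.toHom
  · let g : H →g H.induce S := ⟨fun x => ⟨f x, x, rfl⟩, fun h => f.map_rel h⟩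
    exact ((SimpleGraph.Iso.map e (H.induce S)).toHom.comp g).comp b

lemma core_odd {n : ℕ} (H : SimpleGraph (Fin n)) (hn : 3 ≤ n)
    (hcore : ∀ f : H →g H, Function.Bijective f) :
    ∃ (u : Fin n) (w : H.Walk u u), Odd w.length := by
  by_contra hno
  have h2 : H.Colorable 2 := by
    rw [SimpleGraph.two_colorable_iff_forall_loop_even]
    intro u w
    rw [← Nat.not_odd_iff_even]
    exact fun h => hno ⟨u, w, h⟩
  obtain ⟨c⟩ := h2
  have hinj : ∃ f : H →g H, ∃ g : Fin 2 → Fin n, ∀ x, f x = g (c x) := by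
    by_cases hE : ∃ a b, H.Adj a b
    · obtain ⟨a, b, hab⟩ := hE
      refine ⟨⟨fun x => ![a, b] (c x), fun {x y} h => ?_⟩, ![a, b], fun x => rfl⟩
      have := c.valid h
      generalize c x = i at *
      generalize c y = j at *
      fin_cases i <;> fin_cases j <;> simp_all [H.adj_comm]
    · push Not at hE
      exact ⟨⟨fun x => ⟨0, by omega⟩, fun h => absurd h (hE _ _)⟩, fun _ => ⟨0, by omega⟩,
        fun x => rfl⟩
  obtain ⟨f, g, hfg⟩ := hinj
  have hci : Function.Injective c := by
    intro x y hxy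
    apply (hcore f).1
    rw [hfg, hfg, hxy]
  have := Fintype.card_le_of_injective c hci
  simp at this
  omega

lemma step {ι : Type} [Fintype ι] (n : ι → ℕ) (H : ∀ i, SimpleGraph (Fin (n i)))
    (hn : ∀ i, 3 ≤ n i) (hcore : ∀ i, ∀ f : H i →g H i, Function.Bijective f) :
    ∃ (m : ℕ) (H' : SimpleGraph (Fin m)), 3 ≤ m ∧
      (∀ f : H' →g H', Function.Bijective f) ∧
      ∀ i, IsEmpty (H' →g H i) ∧ IsEmpty (H i →g H') := by
  choose u w hw using fun i => core_odd (H i) (hn i) (hcore i)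
  obtain ⟨N, hN⟩ := shift_not_colorable (2 * ∑ i, (w i).length) (2 + ∑ i, n i)
  obtain ⟨m, H', hc, ⟨a⟩, ⟨b⟩⟩ := exists_core (ShiftG (2 * ∑ i, (w i).length + 1) N)
  have key : ∀ (k : ℕ) (F : SimpleGraph (Fin k)), k ≤ 2 + ∑ i, n i → (H' →g F) → False := by
    intro k F hk f
    have hF : F.Colorable k := by simpa using F.colorable_of_fintype
    exact hN ((hF.mono hk).of_hom (f.comp b))
  refine ⟨m, H', ?_, hc, fun i => ⟨⟨fun f => ?_⟩, ⟨fun f => ?_⟩⟩⟩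
  · by_contra hm
    exact key m H' (by omega) SimpleGraph.Hom.id
  · have := Finset.single_le_sum (f := n) (fun _ _ => Nat.zero_le _) (Finset.mem_univ i)
    exact key _ _ (by omega) f
  · have := Finset.single_le_sum (f := fun i => (w i).length) (fun _ _ => Nat.zero_le _)
      (Finset.mem_univ i)
    refine shift_no_odd ((w i).map (a.comp f)) (by rw [SimpleGraph.Walk.length_map]; exact hw i) ?_
    simp only [SimpleGraph.Walk.length_map]
    omega

lemma families (N : ℕ) : ∃ K : Fin N → (Σ m : ℕ, SimpleGraph (Fin m)),
    (∀ j, 3 ≤ (K j).1) ∧ (∀ j, ∀ f : (K j).2 →g (K j).2, Function.Bijective f) ∧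
      ∀ j j', j ≠ j' → IsEmpty ((K j).2 →g (K j').2) := by
  induction N with
  | zero => exact ⟨fun j => j.elim0, fun j => j.elim0, fun j => j.elim0, fun j => j.elim0⟩
  | succ N ih =>
    obtain ⟨K, h1, h2, h3⟩ := ih
    obtain ⟨m, H', g1, g2, g3⟩ := step (fun j => (K j).1) (fun j => (K j).2) h1 h2
    refine ⟨Fin.cons ⟨m, H'⟩ K, ?_, ?_, ?_⟩
    · intro j
      cases j using Fin.cases with
      | zero => exact g1
      | succ j => exact h1 j
    · intro j
      cases j using Fin.cases with
      | zero => exact g2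
      | succ j => exact h2 j
    · intro j j' hne
      cases j using Fin.cases with
      | zero =>
        cases j' using Fin.cases with
        | zero => exact absurd rfl hne
        | succ j' => exact (g3 j').1
      | succ j =>
        cases j' using Fin.cases with
        | zero => exact (g3 j).2
        | succ j' => exact h3 j j' (fun h => hne (by rw [h]))


/-- For every finite family of pairwise incomparable non-trivial cores
`H 0, …, H k`, there exists a core incomparable with each of them; consequently,
for every `N` there is a family of `N` pairwise incomparable cores. -/
theorem exists_incomparable_core (k : ℕ) (n : Fin (k + 1) → ℕ)
    (H : ∀ i, SimpleGraph (Fin (n i)))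
    (hnontriv : ∀ i, 3 ≤ n i)
    (hcore : ∀ i, ∀ f : H i →g H i, Function.Bijective f)
    (hinc : ∀ i j, i ≠ j → IsEmpty (H i →g H j)) :
    (∃ (m : ℕ) (H' : SimpleGraph (Fin m)),
      (∀ f : H' →g H', Function.Bijective f) ∧
      ∀ i, IsEmpty (H' →g H i) ∧ IsEmpty (H i →g H')) ∧
    (∀ N : ℕ, ∃ (n' : Fin N → ℕ) (K : ∀ j, SimpleGraph (Fin (n' j))),
      (∀ j, ∀ f : K j →g K j, Function.Bijective f) ∧
      ∀ j j', j ≠ j' → IsEmpty (K j →g K j')) := by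
  refine ⟨?_, fun N => ?_⟩
  · obtain ⟨m, H', _, h⟩ := step n H hnontriv hcore
    exact ⟨m, H', h⟩
  · obtain ⟨K, _, h⟩ := families N
    exact ⟨fun j => (K j).1, fun j => (K j).2, h⟩
end
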